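/- arXiv:2011.01791 — 2 statements merged into one kernel-verified Lean document; each statement's English description precedes it below -/
import Mathlib

section
/- In any identical singleton congestion game with a partition coalition structure C, every feasible allocation a that is maximal with respect to the C-balance dominance relation is Pareto efficient, i.e., the grand coalition N does not block a. -/
/-!
If the grand coalition blocks `a` via `b`, then `kernel b` is lexicographically smaller than
`kernel a`, so `b` dominates `a` already by the first clause of balance dominance.

Every agent's congestion weakly decreases from `a` to `b`. Let `s` be the largest congestion
under `a` of an agent who strictly improves. For `t > s` the agents with congestion `t` are the
same in `a` and `b`, while the agents with congestion `s` in `b` form a proper subset of those in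
`a`. An allocation has exactly `t` agents of congestion `t` per resource of cardinality `t`
(`card_agents_eq`), so the same comparison holds for the numbers of resources of cardinality `t`
and `s`. For nonincreasing lists this comparison of multiplicities gives lexicographic
precedence (`lex_of_count`).
-/

variable {N M : Type*} [Fintype N] [DecidableEq N] [Fintype M] [DecidableEq M]

/-- `a` is an allocation: resources hold pairwise disjoint sets of agents whose union is `N`. -/
def IsAllocation (a : M → Finset N) : Prop :=
  (∀ i₁ i₂ : M, i₁ ≠ i₂ → Disjoint (a i₁) (a i₂)) ∧ (∀ j : N, ∃ i : M, j ∈ a i)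

/-- `a` respects the feasibility constraint `f`. -/
def Feasible (f a : M → Finset N) : Prop := ∀ i : M, a i ⊆ f i

/-- Coalition `c` blocks allocation `a` via the (feasible) allocation `abar`. -/
def BlocksVia (f : M → Finset N) (c : Finset N) (a abar : M → Finset N) : Prop :=
  IsAllocation abar ∧ Feasible f abar ∧
  (∀ i : M, a i \ c = abar i \ c) ∧
  (∀ j ∈ c, ∀ i₁ i₂ : M, j ∈ a i₁ → j ∈ abar i₂ → (abar i₂).card ≤ (a i₁).card) ∧
  (∃ j ∈ c, ∃ i₁ i₂ : M, j ∈ a i₁ ∧ j ∈ abar i₂ ∧ (abar i₂).card < (a i₁).card)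

/-- Coalition `c` blocks allocation `a`. -/
def Blocks (f : M → Finset N) (c : Finset N) (a : M → Finset N) : Prop :=
  ∃ abar : M → Finset N, BlocksVia f c a abar

/-- The kernel of `a`: the list of resource cardinalities, in nonincreasing order. -/
def kernel (a : M → Finset N) : List ℕ :=
  ((Finset.univ.val.map fun i : M => (a i).card).sort (· ≤ ·)).reverse

/-- The `c`-kernel of `a`: the list `(|c ∩ a i|)_{i ∈ M}`, in nonincreasing order. -/
def ckernel (c : Finset N) (a : M → Finset N) : List ℕ :=
  ((Finset.univ.val.map fun i : M => (c ∩ a i).card).sort (· ≤ ·)).reverse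

/-- The `c`-welfare-kernel of `a`: the list `(|c_n|, |c_{n-1}|, …, |c_1|)`, where `c_s` is the set
of members of `c` assigned to a resource of cardinality `s`, and `n` is the number of agents. -/
def wkernel (c : Finset N) (a : M → Finset N) : List ℕ :=
  (List.range (Fintype.card N)).map fun t =>
    (c.filter fun j => ∃ i : M, j ∈ a i ∧ (a i).card = Fintype.card N - t).card

/-- `a` C-balance dominates `abar`. -/
def BalanceDominates (C : Set (Finset N)) (a abar : M → Finset N) : Prop :=
  List.Lex (· < ·) (kernel a) (kernel abar) ∨
  (kernel a = kernel abar ∧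
    (∀ c ∈ C, ckernel c a = ckernel c abar ∨ List.Lex (· < ·) (ckernel c a) (ckernel c abar)) ∧
    (∃ c ∈ C, List.Lex (· < ·) (ckernel c a) (ckernel c abar)))

/-- `C` is a partition coalition structure. -/
def IsPartitionStructure (C : Set (Finset N)) : Prop :=
  (∀ c ∈ C, c.Nonempty) ∧
  (∀ c ∈ C, ∀ c' ∈ C, c ≠ c' → Disjoint c c') ∧
  (∀ j : N, ∃ c ∈ C, j ∈ c)

/-- A nonincreasing list precedes another one lexicographically if the multiplicities agree above
some value `s` and the multiplicity of `s` itself is smaller in the first list. -/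
theorem lex_of_count (s : ℕ) : ∀ l₁ l₂ : List ℕ, l₁.Pairwise (· ≥ ·) → l₂.Pairwise (· ≥ ·) →
    (∀ t, s < t → l₁.count t = l₂.count t) → l₁.count s < l₂.count s →
    List.Lex (· < ·) l₁ l₂
  | _, [], _, _, _, h => by simp at h
  | [], _ :: _, _, _, _, _ => List.Lex.nil
  | x :: l₁, y :: l₂, h₁, h₂, heq, hlt => by
    rw [List.pairwise_cons] at h₁ h₂
    rcases lt_trichotomy x y with hxy | rfl | hxy
    · exact List.Lex.rel hxy
    · refine List.Lex.cons (lex_of_count s l₁ l₂ h₁.2 h₂.2 (fun t ht => ?_) ?_)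
      · have := heq t ht
        simp only [List.count_cons] at this
        omega
      · simp only [List.count_cons] at hlt
        omega
    · exfalso
      have hle : ∀ z ∈ y :: l₂, z ≤ y := by
        intro z hz
        rcases List.mem_cons.1 hz with rfl | hz
        · exact le_rfl
        · exact h₂.1 z hz
      rcases lt_or_ge s x with hsx | hsx
      · have hpos : 0 < (y :: l₂).count x := by
          rw [← heq x hsx]
          exact List.count_pos_iff.2 List.mem_cons_self
        have := hle x (List.count_pos_iff.1 hpos)
        omega
      · have := hle s (List.count_pos_iff.1 (by omega))
        omega

theorem kernel_pairwise {N M : Type*} [Fintype M] (a : M → Finset N) :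
    (kernel a).Pairwise (· ≥ ·) := by
  unfold kernel
  rw [List.pairwise_reverse]
  exact Multiset.pairwise_sort _ _

theorem count_kernel {N M : Type*} [Fintype M] (a : M → Finset N) (t : ℕ) :
    (kernel a).count t = (Finset.univ.filter fun i => (a i).card = t).card := by
  unfold kernel
  rw [List.count_reverse, ← Multiset.coe_count, Multiset.sort_eq, Multiset.count_map]
  simp only [eq_comm (a := t)]
  rfl

/-- The agents of congestion `t` are partitioned into the resources of cardinality `t`. Here `p`
sends each agent to its resource. -/
theorem card_agents_eq {N M : Type*} [Fintype N] [DecidableEq N] [Fintype M]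
    (a : M → Finset N) (ha : IsAllocation a) (p : N → M) (hp : ∀ j, j ∈ a (p j)) (t : ℕ) :
    (Finset.univ.filter fun j => (a (p j)).card = t).card = (kernel a).count t * t := by
  classical
  have hset : (Finset.univ.filter fun j => (a (p j)).card = t)
      = (Finset.univ.filter fun i => (a i).card = t).biUnion a := by
    ext j
    simp only [Finset.mem_filter, Finset.mem_univ, true_and, Finset.mem_biUnion]
    refine ⟨fun h => ⟨p j, h, hp j⟩, ?_⟩
    rintro ⟨i, hi, hj⟩
    have : p j = i := by
      by_contra hne
      exact Finset.disjoint_left.1 (ha.1 _ _ hne) (hp j) hj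
    rw [this, hi]
  rw [hset, Finset.card_biUnion (fun i _ i' _ h => ha.1 i i' h), count_kernel]
  exact Finset.sum_const_nat fun i hi => (Finset.mem_filter.1 hi).2

/-- Every feasible allocation maximal w.r.t. `C`-balance dominance is Pareto efficient. -/
theorem maximal_is_pareto
    {N M : Type*} [Fintype N] [DecidableEq N] [Fintype M] [DecidableEq M]
    [Nonempty N] [Nonempty M]
    (f : M → Finset N) (hf : ∀ j : N, ∃ i : M, j ∈ f i)
    (C : Set (Finset N)) (hC : IsPartitionStructure C)
    (a : M → Finset N) (ha : IsAllocation a) (haf : Feasible f a)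
    (hmax : ∀ abar : M → Finset N, IsAllocation abar → Feasible f abar →
      ¬ BalanceDominates C abar a) :
    ¬ Blocks f Finset.univ a := by
  rintro ⟨b, hb, hbf, -, hle, j₀, -, i₁, i₂, h₁, h₂, hlt⟩
  refine hmax b hb hbf (Or.inl ?_)
  choose p hp using ha.2
  choose q hq using hb.2
  have hp_eq : p j₀ = i₁ := by
    by_contra hne
    exact Finset.disjoint_left.1 (ha.1 _ _ hne) (hp j₀) h₁
  have hq_eq : q j₀ = i₂ := by
    by_contra hne
    exact Finset.disjoint_left.1 (hb.1 _ _ hne) (hq j₀) h₂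
  have hxy : ∀ j, (b (q j)).card ≤ (a (p j)).card := fun j =>
    hle j (Finset.mem_univ j) _ _ (hp j) (hq j)
  -- `j` is a strictly improving agent of largest congestion under `a`
  obtain ⟨j, hj, hmaxj⟩ := Finset.exists_max_image
    (Finset.univ.filter fun j => (b (q j)).card < (a (p j)).card) (fun j => (a (p j)).card)
    ⟨j₀, by simpa [hp_eq, hq_eq] using hlt⟩
  simp only [Finset.mem_filter, Finset.mem_univ, true_and] at hj hmaxj
  refine lex_of_count (a (p j)).card _ _ (kernel_pairwise b) (kernel_pairwise a)
    (fun t ht => ?_) ?_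
  · have hcard : (Finset.univ.filter fun j => (b (q j)).card = t).card
        = (Finset.univ.filter fun j => (a (p j)).card = t).card := by
      congr 1
      ext k
      simp only [Finset.mem_filter, Finset.mem_univ, true_and]
      have h1 := hxy k
      have h2 := hmaxj k
      omega
    rw [card_agents_eq b hb q hq, card_agents_eq a ha p hp] at hcard
    exact Nat.eq_of_mul_eq_mul_right (by omega) hcard
  · have hcard : (Finset.univ.filter fun k => (b (q k)).card = (a (p j)).card).card
        < (Finset.univ.filter fun k => (a (p k)).card = (a (p j)).card).card := by
      refine Finset.card_lt_card (Finset.ssubset_iff_of_subset (fun k => ?_) |>.2 ⟨j, ?_, ?_⟩)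
      · simp only [Finset.mem_filter, Finset.mem_univ, true_and]
        have h1 := hxy k
        have h2 := hmaxj k
        omega
      · simp
      · simpa using hj.ne
    rw [card_agents_eq b hb q hq, card_agents_eq a ha p hp] at hcard
    exact Nat.lt_of_mul_lt_mul_right hcard
end

section
/- Let C be a partition coalition structure of an ISCG, let j₁ be an agent in a coalition c ∈ C, and let allocations a and ā be such that ā = a ⊕ i₁→(j₁)→i₂ (i.e., j₁ moves from resource i₁ to resource i₂ and all other agents keep their resource). If |a_{i₁}| = |a_{i₂}| + 1 and |c ∩ a_{i₁}| ≥ |c ∩ a_{i₂}| + 2, then ā C-balance dominates a. -/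
/-!
The move replaces the entries `|a i₁|, |a i₂|` of the list of loads by `|a i₁| - 1, |a i₂| + 1`
and keeps all other entries. Since `|a i₁| = |a i₂| + 1`, this merely swaps the two entries, so
the kernels agree. A coalition other than `c` does not contain `j₁`, so its kernel is unchanged.
For `c`, put `p = |c ∩ a i₁|`: the two changed entries become `p - 1` and `|c ∩ a i₂| + 1`, both
below `p`. Hence the number of entries equal to `k` is unchanged for every `k > p` and drops for
`k = p`, which makes the nonincreasing list lexicographically smaller (`lex_of_count`).
-/

variable {N M : Type*} [Fintype N] [DecidableEq N] [Fintype M] [DecidableEq M]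

/-- Nonincreasing lists are compared lexicographically by the largest value whose multiplicities
differ. -/
lemma lex_of_count_s7 (p : ℕ) : ∀ l l' : List ℕ, l.Pairwise (· ≥ ·) → l'.Pairwise (· ≥ ·) →
    (∀ k, p < k → l.count k = l'.count k) → l.count p < l'.count p →
    List.Lex (· < ·) l l'
  | _, [], _, _, _, hp => by simp at hp
  | [], _ :: _, _, _, _, _ => List.Lex.nil
  | x :: l, y :: l', h, h', hk, hp => by
    rw [List.pairwise_cons] at h h'
    rcases lt_trichotomy x y with hxy | rfl | hxy
    · exact List.Lex.rel hxy
    · refine List.Lex.cons (lex_of_count_s7 p l l' h.2 h'.2 (fun k hkp => ?_) ?_)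
      · have := hk k hkp
        simp only [List.count_cons] at this
        omega
      · simp only [List.count_cons] at hp
        omega
    · -- As `p` occurs in the second list, it is at most `y < x`, so `x` occurs equally often in both
      -- lists; but it exceeds every entry of the second one.
      exfalso
      have hle : ∀ z ∈ y :: l', z ≤ y := by
        intro z hz
        rcases List.mem_cons.1 hz with rfl | hz
        · exact le_rfl
        · exact h'.1 z hz
      have hpy : p ≤ y := hle p (List.count_pos_iff.1 (by omega))
      have hx : x ∈ y :: l' := by
        rw [← List.count_pos_iff, ← hk x (by omega)]
        exact List.count_pos_iff.2 List.mem_cons_self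
      have := hle x hx
      omega

/-- `lex_of_count` for the nonincreasing enumerations of two multisets. -/
lemma lex_sort_reverse_of_count (p : ℕ) (s t : Multiset ℕ)
    (hk : ∀ k, p < k → s.count k = t.count k) (hp : s.count p < t.count p) :
    List.Lex (· < ·) (s.sort (· ≤ ·)).reverse (t.sort (· ≤ ·)).reverse := by
  have hcount : ∀ (u : Multiset ℕ) (k : ℕ), (u.sort (· ≤ ·)).reverse.count k = u.count k := by
    intro u k
    rw [List.count_reverse, ← Multiset.coe_count, Multiset.sort_eq]
  refine lex_of_count_s7 p _ _ ?_ ?_ (fun k h => ?_) ?_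
  · exact List.pairwise_reverse.2 (Multiset.pairwise_sort s (· ≤ ·))
  · exact List.pairwise_reverse.2 (Multiset.pairwise_sort t (· ≤ ·))
  · rw [hcount, hcount, hk k h]
  · rwa [hcount, hcount]

lemma map_univ_eq_cons_cons {M : Type*} [Fintype M] [DecidableEq M] {i₁ i₂ : M} (hi : i₁ ≠ i₂)
    (g : M → ℕ) :
    (Finset.univ.val.map g) =
      g i₁ ::ₘ g i₂ ::ₘ (((Finset.univ.erase i₁).erase i₂).val.map g) := by
  have e₁ : (Finset.univ : Finset M) = Finset.cons i₁ (Finset.univ.erase i₁) (by simp) := by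
    simp
  have e₂ : (Finset.univ.erase i₁ : Finset M) =
      Finset.cons i₂ ((Finset.univ.erase i₁).erase i₂) (by simp) := by
    rw [Finset.cons_eq_insert, Finset.insert_erase]
    simp [hi.symm]
  conv_lhs => rw [e₁, Finset.cons_val, Multiset.map_cons, e₂, Finset.cons_val, Multiset.map_cons]

/-- Lemma 2(b): if `abar = a ⊕ i₁→(j₁)→i₂` with `|a i₁| = |a i₂| + 1` and
`|c ∩ a i₁| ≥ |c ∩ a i₂| + 2`, then `abar` `C`-balance dominates `a`. -/
theorem move_balance_dominates_of_coalition_card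
    {N M : Type*} [Fintype N] [DecidableEq N] [Fintype M] [DecidableEq M]
    (C : Set (Finset N)) (hC : IsPartitionStructure C)
    (c : Finset N) (hc : c ∈ C) (j₁ : N) (hj₁ : j₁ ∈ c)
    (i₁ i₂ : M) (hi : i₁ ≠ i₂)
    (a abar : M → Finset N) (ha : IsAllocation a) (habar : IsAllocation abar)
    (h₁ : j₁ ∈ a i₁) (h₂ : j₁ ∈ abar i₂)
    (hrest : ∀ j : N, j ≠ j₁ → ∀ i : M, j ∈ a i ↔ j ∈ abar i)
    (hcard : (a i₁).card = (a i₂).card + 1)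
    (hccard : (c ∩ a i₂).card + 2 ≤ (c ∩ a i₁).card) :
    BalanceDominates C abar a := by
  have hn₁ : j₁ ∉ abar i₁ := fun h => Finset.disjoint_left.1 (habar.1 _ _ hi) h h₂
  have hn₂ : j₁ ∉ a i₂ := fun h => Finset.disjoint_left.1 (ha.1 _ _ hi) h₁ h
  have e₁ : a i₁ = insert j₁ (abar i₁) := by
    ext j
    by_cases h : j = j₁
    · simp [h, h₁]
    · simp [h, hrest j h]
  have e₂ : abar i₂ = insert j₁ (a i₂) := by
    ext j
    by_cases h : j = j₁
    · simp [h, h₂]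
    · simp [h, hrest j h]
  have e₃ : ∀ i, i ≠ i₁ → i ≠ i₂ → abar i = a i := by
    intro i hi₁ hi₂
    ext j
    by_cases h : j = j₁
    · subst h
      have n₁ : j ∉ a i := fun h => Finset.disjoint_left.1 (ha.1 _ _ hi₁) h h₁
      have n₂ : j ∉ abar i := fun h => Finset.disjoint_left.1 (habar.1 _ _ hi₂) h h₂
      simp [n₁, n₂]
    · exact (hrest j h i).symm
  have c₁ : (a i₁).card = (abar i₁).card + 1 := by
    rw [e₁, Finset.card_insert_of_notMem hn₁]
  have c₂ : (abar i₂).card = (a i₂).card + 1 := by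
    rw [e₂, Finset.card_insert_of_notMem hn₂]
  have d₁ : (c ∩ a i₁).card = (c ∩ abar i₁).card + 1 := by
    rw [e₁, Finset.inter_insert_of_mem hj₁, Finset.card_insert_of_notMem (by simp [hn₁])]
  have d₂ : (c ∩ abar i₂).card = (c ∩ a i₂).card + 1 := by
    rw [e₂, Finset.inter_insert_of_mem hj₁, Finset.card_insert_of_notMem (by simp [hn₂])]
  have hlex : List.Lex (· < ·) (ckernel c abar) (ckernel c a) := by
    have hR : ((Finset.univ.erase i₁).erase i₂).val.map (fun i : M => (c ∩ abar i).card) =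
        ((Finset.univ.erase i₁).erase i₂).val.map (fun i : M => (c ∩ a i).card) := by
      refine Multiset.map_congr rfl fun i hmem => ?_
      simp only [Finset.mem_val, Finset.mem_erase] at hmem
      rw [e₃ i hmem.2.1 hmem.1]
    refine lex_sort_reverse_of_count (c ∩ a i₁).card _ _ (fun k hk => ?_) ?_
    · rw [map_univ_eq_cons_cons hi, map_univ_eq_cons_cons hi, hR]
      simp only [Multiset.count_cons]
      split_ifs <;> omega
    · rw [map_univ_eq_cons_cons hi, map_univ_eq_cons_cons hi, hR]
      simp only [Multiset.count_cons]
      split_ifs <;> omega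
  refine Or.inr ⟨?_, fun c' hc' => ?_, c, hc, hlex⟩
  · have hR : ((Finset.univ.erase i₁).erase i₂).val.map (fun i : M => (abar i).card) =
        ((Finset.univ.erase i₁).erase i₂).val.map (fun i : M => (a i).card) := by
      refine Multiset.map_congr rfl fun i hmem => ?_
      simp only [Finset.mem_val, Finset.mem_erase] at hmem
      rw [e₃ i hmem.2.1 hmem.1]
    have f₁ : (abar i₁).card = (a i₂).card := by omega
    have f₂ : (abar i₂).card = (a i₁).card := by omega
    unfold kernel
    rw [map_univ_eq_cons_cons hi, map_univ_eq_cons_cons hi, hR, f₁, f₂, Multiset.cons_swap]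
  · by_cases hcc : c' = c
    · exact Or.inr (hcc ▸ hlex)
    · left
      have hj : j₁ ∉ c' := fun h => Finset.disjoint_left.1 (hC.2.1 _ hc' _ hc hcc) h hj₁
      have : ∀ i, c' ∩ abar i = c' ∩ a i := by
        intro i
        ext j
        by_cases h : j = j₁
        · simp [h, hj]
        · simp [hrest j h]
      simp only [ckernel, this]
end
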